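/- Let Γ be a countable group, μ a probability measure on Γ, and S a compact metric space. Let ρ_n, ρ : Γ → Homeo(S) be actions of Γ on S by homeomorphisms such that for every γ ∈ Γ the maps ρ_n(γ) converge uniformly to ρ(γ). For each n let ν_n be a Borel probability measure on S that is μ-stationary for the action ρ_n, i.e. ν_n = Σ_γ μ(γ)·ρ_n(γ)_*ν_n. Assume the action ρ has a unique μ-stationary Borel probability measure ν on S. Then ν_n converges to ν in the weak-* topology on the space of Borel probability measures on S. -/

import Mathlib

open MeasureTheory Filter
open scoped NNReal

/-!
Stationarity of `η` for a family of maps `φ` is the collection of identities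
`∫ f ∂η = ∑' γ, μ γ * ∫ f ∘ φ γ ∂η` over bounded continuous `f`. Since `(g, η) ↦ ∫ g ∂η` is
`1`-Lipschitz in `g` uniformly in `η`, it is jointly continuous, and so is each side of these
identities as a function of `(φ, η)`. Hence the stationary pairs form a closed set, every cluster
point of the given stationary measures is stationary for the limit family, and by uniqueness it is
`ν`. Compactness of the space of probability measures then forces convergence.
-/

open Topology
open scoped BoundedContinuousFunction

section IntegralContinuity

variable {X Y : Type*} [TopologicalSpace X] [MeasurableSpace X] [OpensMeasurableSpace X]
  [TopologicalSpace Y]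

theorem lipschitzWith_one_integral_boundedContinuousFunction (η : Measure X)
    [IsProbabilityMeasure η] : LipschitzWith 1 fun g : X →ᵇ ℝ => ∫ x, g x ∂η := by
  refine LipschitzWith.mk_one fun g h => ?_
  rw [dist_eq_norm, dist_eq_norm, ← integral_sub (g.integrable η) (h.integrable η)]
  exact (g - h).norm_integral_le_norm η

theorem continuous_integral_boundedContinuousFunction_prod :
    Continuous fun p : (X →ᵇ ℝ) × ProbabilityMeasure X => ∫ x, p.1 x ∂(p.2 : Measure X) :=
  continuous_prod_of_continuous_lipschitzWith _ 1
    ProbabilityMeasure.continuous_integral_boundedContinuousFunction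
    fun η => lipschitzWith_one_integral_boundedContinuousFunction (η : Measure X)

theorem continuous_integral_comp_prod [CompactSpace X] (f : Y →ᵇ ℝ) :
    Continuous fun p : C(X, Y) × ProbabilityMeasure X => ∫ x, f (p.1 x) ∂(p.2 : Measure X) := by
  have hcomp : Continuous fun φ : C(X, Y) =>
      BoundedContinuousFunction.mkOfCompact (f.toContinuousMap.comp φ) :=
    (ContinuousMap.isometryEquivBoundedOfCompact X ℝ).continuous.comp
      (ContinuousMap.continuous_postcomp f.toContinuousMap)
  exact continuous_integral_boundedContinuousFunction_prod.comp (hcomp.prodMap continuous_id)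

theorem continuous_tsum_mul_integral_comp_prod [CompactSpace X] {Γ : Type*} {μ : Γ → ℝ≥0}
    (hμ : Summable μ) (f : Y →ᵇ ℝ) :
    Continuous fun p : (Γ → C(X, Y)) × ProbabilityMeasure X =>
      ∑' γ, (μ γ : ℝ) * ∫ x, f (p.1 γ x) ∂(p.2 : Measure X) := by
  refine continuous_tsum (u := fun γ => (μ γ : ℝ) * ‖f‖) (fun γ => ?_)
    ((NNReal.summable_coe.2 hμ).mul_right _) fun γ p => ?_
  · have hγ : Continuous fun p : (Γ → C(X, Y)) × ProbabilityMeasure X => (p.1 γ, p.2) := by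
      fun_prop
    exact ((continuous_integral_comp_prod f).comp hγ).const_mul _
  · have hbound := norm_integral_le_of_norm_le_const (μ := (p.2 : Measure X))
      (Eventually.of_forall fun x => f.norm_coe_le_norm (p.1 γ x))
    rw [probReal_univ, mul_one] at hbound
    rw [norm_mul, NNReal.norm_eq]
    gcongr

end IntegralContinuity

section AveragedPushforward

variable {Γ X Y : Type*} [MeasurableSpace X] [MeasurableSpace Y] {μ : Γ → ℝ≥0}

/-- The measure `∑ γ, μ γ • (φ γ)_* η`; when `μ` and `η` are probabilities, it is the law of `φ γ x`
for independent `γ` and `x` distributed as `μ` and `η`. -/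
noncomputable def averagedPushforward (μ : Γ → ℝ≥0) (φ : Γ → X → Y) (η : Measure X) : Measure Y :=
  Measure.sum fun γ => μ γ • Measure.map (φ γ) η

theorem averagedPushforward_univ {φ : Γ → X → Y} (hφ : ∀ γ, Measurable (φ γ)) (η : Measure X) :
    averagedPushforward μ φ η Set.univ = (∑' γ, (μ γ : ENNReal)) * η Set.univ := by
  simp only [averagedPushforward, Measure.sum_apply _ MeasurableSet.univ, Measure.smul_apply,
    Measure.map_apply (hφ _) MeasurableSet.univ, Set.preimage_univ, ENNReal.smul_def, smul_eq_mul,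
    ENNReal.tsum_mul_right]

theorem isFiniteMeasure_averagedPushforward (hμ : Summable μ) {φ : Γ → X → Y}
    (hφ : ∀ γ, Measurable (φ γ)) (η : Measure X) [IsFiniteMeasure η] :
    IsFiniteMeasure (averagedPushforward μ φ η) where
  measure_univ_lt_top := by
    rw [averagedPushforward_univ hφ]
    exact ENNReal.mul_lt_top (ENNReal.tsum_coe_ne_top_iff_summable.2 hμ).lt_top
      (measure_lt_top η _)

theorem integral_averagedPushforward {φ : Γ → X → Y} (hφ : ∀ γ, Measurable (φ γ)) {η : Measure X}
    {f : Y → ℝ} (hfm : StronglyMeasurable f) (hf : Integrable f (averagedPushforward μ φ η)) :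
    ∫ y, f y ∂averagedPushforward μ φ η = ∑' γ, (μ γ : ℝ) * ∫ x, f (φ γ x) ∂η := by
  rw [averagedPushforward, integral_sum_measure hf]
  refine tsum_congr fun γ => ?_
  rw [integral_smul_nnreal_measure, integral_map_of_stronglyMeasurable (hφ γ) hfm,
    NNReal.smul_def, smul_eq_mul]

end AveragedPushforward

section Stationary

variable {Γ S : Type*} [MeasurableSpace S] {μ : Γ → ℝ≥0}

/-- `η` is `μ`-stationary for the family of self-maps `φ`: it is a fixed point of
`averagedPushforward μ φ`. The maps need not come from a group action, and `μ` need not have total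
mass `1`. -/
def IsStationaryMeasure (μ : Γ → ℝ≥0) (φ : Γ → S → S) (η : Measure S) : Prop :=
  η = averagedPushforward μ φ η

variable [TopologicalSpace S] [BorelSpace S] [HasOuterApproxClosed S]

theorem isStationaryMeasure_iff_forall_integral_eq (hμ : Summable μ) {φ : Γ → S → S}
    (hφ : ∀ γ, Measurable (φ γ)) {η : Measure S} [IsFiniteMeasure η] :
    IsStationaryMeasure μ φ η ↔
      ∀ f : S →ᵇ ℝ, ∫ x, f x ∂η = ∑' γ, (μ γ : ℝ) * ∫ x, f (φ γ x) ∂η := by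
  have := isFiniteMeasure_averagedPushforward hμ hφ η
  have hint (f : S →ᵇ ℝ) := integral_averagedPushforward hφ f.continuous.stronglyMeasurable
    (f.integrable (averagedPushforward μ φ η))
  simp_rw [← hint]
  exact ⟨fun h f => congrArg (fun η' => ∫ x, f x ∂η') h,
    ext_of_forall_integral_eq_of_IsFiniteMeasure⟩

variable [CompactSpace S]

theorem isClosed_setOfPred_isStationaryMeasure (hμ : Summable μ) :
    IsClosed {p : (Γ → C(S, S)) × ProbabilityMeasure S |
      IsStationaryMeasure μ (fun γ => p.1 γ) (p.2 : Measure S)} := by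
  simp_rw [isStationaryMeasure_iff_forall_integral_eq hμ fun _ => ContinuousMap.measurable _,
    Set.ofPred_forall]
  exact isClosed_iInter fun f => isClosed_eq
    ((ProbabilityMeasure.continuous_integral_boundedContinuousFunction f).comp continuous_snd)
    (continuous_tsum_mul_integral_comp_prod hμ f)

variable {ι : Type*} {l : Filter ι} {φs : ι → Γ → C(S, S)} {φ : Γ → C(S, S)}
  {νs : ι → ProbabilityMeasure S}

theorem isStationaryMeasure_of_mapClusterPt (hμ : Summable μ) (hφ : Tendsto φs l (𝓝 φ))
    (hνs : ∀ᶠ i in l, IsStationaryMeasure μ (fun γ => φs i γ) (νs i : Measure S))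
    {η : ProbabilityMeasure S} (hη : MapClusterPt η l νs) :
    IsStationaryMeasure μ (fun γ => φ γ) (η : Measure S) := by
  obtain ⟨U, hU, hνU⟩ := mapClusterPt_iff_ultrafilter.1 hη
  exact (isClosed_setOfPred_isStationaryMeasure hμ).mem_of_tendsto
    ((hφ.mono_left hU).prodMk_nhds hνU) (hνs.filter_mono hU)

theorem stationary_measures_weak_star_convergence_general [T2Space S] (hμ : Summable μ)
    (hφ : ∀ γ, Tendsto (fun i => φs i γ) l (𝓝 (φ γ)))
    (hνs : ∀ᶠ i in l, IsStationaryMeasure μ (fun γ => φs i γ) (νs i : Measure S))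
    {ν : ProbabilityMeasure S}
    (hunique : ∀ η : ProbabilityMeasure S,
      IsStationaryMeasure μ (fun γ => φ γ) (η : Measure S) → η = ν) :
    Tendsto νs l (𝓝 ν) :=
  tendsto_nhds_of_unique_mapClusterPt fun η hη =>
    hunique η (isStationaryMeasure_of_mapClusterPt hμ (tendsto_pi_nhds.2 hφ) hνs hη)

end Stationary

/-- Let `Γ` be a countable group and `μ` a probability distribution on `Γ`. Let
`ρₙ, ρ : Γ → S → S` be actions of `Γ` on a compact metric space `S` by homeomorphisms
(homomorphisms into continuous self-maps; since the group elements act invertibly with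
continuous inverses, each `ρ(γ)` is a homeomorphism), such that `ρₙ(γ) → ρ(γ)` uniformly
for every `γ`. If `νₙ` is a `μ`-stationary Borel probability measure for `ρₙ` for each `n`,
and `ρ` has a unique `μ`-stationary Borel probability measure `ν`, then `νₙ → ν` weak-*. -/
theorem stationary_measures_weak_star_convergence
    {Γ : Type*} [Group Γ] [Countable Γ]
    {S : Type*} [MetricSpace S] [CompactSpace S] [MeasurableSpace S] [BorelSpace S]
    (μ : Γ → ℝ≥0) (hμ : ∑' γ, μ γ = 1)
    (ρₙ : ℕ → Γ → S → S) (ρ : Γ → S → S)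
    (hρₙcont : ∀ n γ, Continuous (ρₙ n γ)) (hρcont : ∀ γ, Continuous (ρ γ))
    (hρₙone : ∀ n, ρₙ n 1 = id) (hρone : ρ 1 = id)
    (hρₙmul : ∀ n γ₁ γ₂, ρₙ n (γ₁ * γ₂) = ρₙ n γ₁ ∘ ρₙ n γ₂)
    (hρmul : ∀ γ₁ γ₂, ρ (γ₁ * γ₂) = ρ γ₁ ∘ ρ γ₂)
    (hconv : ∀ γ, TendstoUniformly (fun n x => ρₙ n γ x) (ρ γ) atTop)
    (νₙ : ℕ → Measure S) (hνₙprob : ∀ n, IsProbabilityMeasure (νₙ n))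
    (hνₙstat : ∀ n, νₙ n = Measure.sum fun γ => μ γ • Measure.map (ρₙ n γ) (νₙ n))
    (ν : Measure S) (hνprob : IsProbabilityMeasure ν)
    (hνstat : ν = Measure.sum fun γ => μ γ • Measure.map (ρ γ) ν)
    (hunique : ∀ η : Measure S, IsProbabilityMeasure η →
      η = (Measure.sum fun γ => μ γ • Measure.map (ρ γ) η) → η = ν) :
    ∀ f : C(S, ℝ), Tendsto (fun n => ∫ x, f x ∂(νₙ n)) atTop (nhds (∫ x, f x ∂ν)) := by
  have hs : Summable μ := by
    by_contra h
    simp [tsum_eq_zero_of_not_summable h] at hμ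
  let P : ℕ → ProbabilityMeasure S := fun n => ⟨νₙ n, hνₙprob n⟩
  let P₀ : ProbabilityMeasure S := ⟨ν, hνprob⟩
  have hlim : Tendsto P atTop (𝓝 P₀) :=
    stationary_measures_weak_star_convergence_general hs
      (φs := fun n γ => ⟨ρₙ n γ, hρₙcont n γ⟩) (φ := fun γ => ⟨ρ γ, hρcont γ⟩)
      (νs := P) (fun γ => ContinuousMap.tendsto_iff_tendstoUniformly.2 (hconv γ))
      (Eventually.of_forall hνₙstat)
      fun η hη => Subtype.ext (hunique η η.2 hη)
  exact fun f => ProbabilityMeasure.tendsto_iff_forall_integral_tendsto.1 hlim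
    (BoundedContinuousFunction.mkOfCompact f)
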